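/- For every odd integer n and every integer t ≥ 3, the number of 2×4 matrices X over ℤ/2^tℤ satisfying X·Xᵀ = G_n (mod 2^t) equals (3/2) · 2^{5t} = 3 · 2^{5t − 1}; that is, for odd n the dyadic solution count defining the local density γ_2 stabilizes already at t = 3. -/

import Mathlib

/-!
For a unit `a`, identify the two rows of `X` with quaternions `x` and `y`. The equation
`X Xᵀ = diag(a, b)` says that `x` has norm `a` and that `z = y x̄` is purely imaginary of norm
`a b`, and `y ↦ y x̄` is bijective. So the count is the number of representations of `a` by four
squares times the number of representations of `a b` by three squares.

The number of representations of a unit `a` of `ℤ/2^tℤ` by a sum of squares is unchanged when `a` is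
multiplied by the square of a unit. Every element congruent to `1` modulo `8` is such a square, so
the number depends only on `a` modulo `8`, and averaging over the fibre above `a mod 8` reduces it
to a count modulo `8`.
-/

open Matrix
open scoped Quaternion

section FiberCounting

lemma card_sigma_const {α : Type*} [Finite α] {β : α → Type*} [∀ x, Finite (β x)] {k : ℕ}
    (hk : ∀ x, Nat.card (β x) = k) : Nat.card (Sigma β) = k * Nat.card α := by
  have := Fintype.ofFinite α
  simp only [Nat.card_sigma, hk, Finset.sum_const, Finset.card_univ, smul_eq_mul,
    Nat.card_eq_fintype_card, mul_comm]

lemma card_subtype_comp {α β : Type*} [Finite α] [Finite β] (f : α → β) (q : β → Prop) (k : ℕ)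
    (hk : ∀ y, q y → Nat.card {x // f x = y} = k) :
    Nat.card {x // q (f x)} = k * Nat.card {y // q y} := by
  rw [← Nat.card_congr (Equiv.sigmaSubtypeFiberEquivSubtype f fun _ => Iff.rfl)]
  exact card_sigma_const fun y => hk y.1 y.2

variable {R S : Type*} [Ring R] [Ring S] {f : R →+* S}

lemma card_fiber_eq_card_ker (hf : Function.Surjective f) (s : S) :
    Nat.card {r // f r = s} = Nat.card (RingHom.ker f) :=
  Nat.card_congr (AddMonoidHom.fiberEquivKerOfSurjective (f := f.toAddMonoidHom) hf s)

lemma card_ker_mul_card (hf : Function.Surjective f) :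
    Nat.card (RingHom.ker f) * Nat.card S = Nat.card R := by
  have hrange : f.toAddMonoidHom.range = ⊤ := AddMonoidHom.range_eq_top.mpr hf
  have h := AddSubgroup.card_mul_index f.toAddMonoidHom.ker
  rwa [AddSubgroup.index_ker, hrange, AddSubgroup.card_top] at h

lemma card_fiber_comp_eq_card_ker_pow {ι : Type*} [Fintype ι] (hf : Function.Surjective f)
    (y : ι → S) :
    Nat.card {x : ι → R // f ∘ x = y} = Nat.card (RingHom.ker f) ^ Fintype.card ι := by
  have e : {x : ι → R // f ∘ x = y} ≃ ∀ i, {r // f r = y i} :=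
    (Equiv.subtypeEquivRight fun x => funext_iff).trans
      (Equiv.subtypePiEquivPi (p := fun i r => f r = y i))
  simp only [Nat.card_congr e, Nat.card_pi, card_fiber_eq_card_ker hf, Finset.prod_const,
    Finset.card_univ]

end FiberCounting

section SumsOfSquares

variable {R S : Type*} [CommRing R] [CommRing S] (ι : Type*) [Fintype ι]

/-- The number of representations of `a` as a sum of squares indexed by `ι`; the junk value `0`
arises when there are infinitely many. -/
noncomputable def sumSqCount (a : R) : ℕ :=
  Nat.card {x : ι → R // x ⬝ᵥ x = a}

lemma sumSqCount_units_sq_mul (u : Rˣ) (a : R) :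
    sumSqCount ι ((u : R) ^ 2 * a) = sumSqCount ι a := by
  refine (Nat.card_congr ((MulAction.toPerm u).subtypeEquiv fun x => ?_)).symm
  have hdot : (u • x) ⬝ᵥ (u • x) = (u : R) ^ 2 * (x ⬝ᵥ x) := by
    simp only [Units.smul_def, smul_dotProduct, dotProduct_smul, smul_eq_mul]
    ring
  rw [MulAction.toPerm_apply, hdot, (u.isUnit.pow 2).mul_right_inj]

/-- Both sides count the vectors over `R` whose sum of squares lies in the fibre above `f a`. -/
lemma card_ker_mul_sumSqCount [Finite R] [Finite S] {f : R →+* S} (hf : Function.Surjective f)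
    (hsq : ∀ v, f v = 1 → ∃ u : Rˣ, (u : R) ^ 2 = v) {a : R} (ha : IsUnit a) :
    Nat.card (RingHom.ker f) * sumSqCount ι a
      = Nat.card (RingHom.ker f) ^ Fintype.card ι * sumSqCount ι (f a) := by
  have hconst : ∀ c, f c = f a → sumSqCount ι c = sumSqCount ι a := by
    intro c hc
    obtain ⟨a, rfl⟩ := ha
    obtain ⟨u, hu⟩ := hsq (c * ↑a⁻¹) (by rw [map_mul, hc, ← map_mul, a.mul_inv, map_one])
    rw [← sumSqCount_units_sq_mul ι u ↑a, hu, a.inv_mul_cancel_right]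
  have hdot : ∀ x : ι → R, f (x ⬝ᵥ x) = (f ∘ x) ⬝ᵥ (f ∘ x) := fun x => f.map_dotProduct x x
  calc Nat.card (RingHom.ker f) * sumSqCount ι a
      = sumSqCount ι a * Nat.card {c // f c = f a} := by
        rw [card_fiber_eq_card_ker hf, mul_comm]
    _ = Nat.card {x : ι → R // f (x ⬝ᵥ x) = f a} :=
        (card_subtype_comp (fun x : ι → R => x ⬝ᵥ x) (f · = f a) _ hconst).symm
    _ = Nat.card {x : ι → R // (f ∘ x) ⬝ᵥ (f ∘ x) = f a} := by simp only [hdot]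
    _ = Nat.card (RingHom.ker f) ^ Fintype.card ι * sumSqCount ι (f a) :=
        card_subtype_comp (f ∘ · : (ι → R) → ι → S) (fun y => y ⬝ᵥ y = f a) _
          fun y _ => card_fiber_comp_eq_card_ker_pow hf y

end SumsOfSquares

section Quaternions

variable {R : Type*} [CommRing R]

lemma normSq_eq_dotProduct_equivTuple (x : ℍ[R]) :
    Quaternion.normSq x = Quaternion.equivTuple R x ⬝ᵥ Quaternion.equivTuple R x := by
  simp [Quaternion.normSq_def', dotProduct, Fin.sum_univ_four, sq]

lemma re_mul_star_eq_dotProduct_equivTuple (x y : ℍ[R]) :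
    (x * star y).re = Quaternion.equivTuple R x ⬝ᵥ Quaternion.equivTuple R y := by
  simp [dotProduct, Fin.sum_univ_four]

/-- The imaginary quaternions, in coordinates. -/
def imaginaryQuaternionEquiv : {z : ℍ[R] // z.re = 0} ≃ (Fin 3 → R) where
  toFun z := ![z.1.imI, z.1.imJ, z.1.imK]
  invFun v := ⟨⟨0, v 0, v 1, v 2⟩, rfl⟩
  left_inv z := Subtype.ext (QuaternionAlgebra.ext z.2.symm rfl rfl rfl)
  right_inv v := by ext i; fin_cases i <;> rfl

lemma card_re_eq_zero_and_normSq_eq (c : R) :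
    Nat.card {z : ℍ[R] // z.re = 0 ∧ Quaternion.normSq z = c} = sumSqCount (Fin 3) c := by
  rw [sumSqCount, ← Nat.card_congr (Equiv.subtypeSubtypeEquivSubtypeInter _ _)]
  refine Nat.card_congr (imaginaryQuaternionEquiv.subtypeEquiv fun z => ?_)
  simp [Quaternion.normSq_def', imaginaryQuaternionEquiv, dotProduct, Fin.sum_univ_three, z.2, sq]

lemma isUnit_of_isUnit_normSq {x : ℍ[R]} (hx : IsUnit (Quaternion.normSq x)) : IsUnit x := by
  have hmul : IsUnit (x * star x) := by
    rw [Quaternion.self_mul_star]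
    exact hx.map (algebraMap R ℍ[R])
  have hcomm : Commute x (star x) := (star_comm_self' x).symm
  exact (hcomm.isUnit_mul_iff.mp hmul).1

/-- With `x` and `y` read as quaternions, the bijection is `y ↦ y * star x`, whose real part is the
scalar product of `y` and `x`. -/
lemma card_orthogonal_and_sumSq_eq {x : Fin 4 → R} (hx : IsUnit (x ⬝ᵥ x)) (b : R) :
    Nat.card {y : Fin 4 → R // y ⬝ᵥ x = 0 ∧ y ⬝ᵥ y = b} = sumSqCount (Fin 3) (x ⬝ᵥ x * b) := by
  obtain ⟨q, rfl⟩ := (Quaternion.equivTuple R).surjective x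
  rw [← normSq_eq_dotProduct_equivTuple] at hx ⊢
  obtain ⟨u, hu⟩ := (isUnit_of_isUnit_normSq hx).star
  rw [← card_re_eq_zero_and_normSq_eq]
  refine Nat.card_congr (((Quaternion.equivTuple R).symm.trans u.mulRight).subtypeEquiv fun y => ?_)
  obtain ⟨p, rfl⟩ := (Quaternion.equivTuple R).surjective y
  rw [Equiv.trans_apply, Equiv.symm_apply_apply, Units.mulRight_apply, hu,
    re_mul_star_eq_dotProduct_equivTuple, map_mul, Quaternion.normSq_star,
    mul_comm (Quaternion.normSq p), hx.mul_right_inj, normSq_eq_dotProduct_equivTuple p]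

end Quaternions

section GramMatrices

variable {R : Type*} [CommRing R] {ι : Type*} [Fintype ι]

lemma mul_transpose_eq_diagonal_iff (X : Matrix (Fin 2) ι R) (a b : R) :
    X * Xᵀ = !![a, 0; 0, b] ↔ X 0 ⬝ᵥ X 0 = a ∧ X 1 ⬝ᵥ X 0 = 0 ∧ X 1 ⬝ᵥ X 1 = b := by
  have hentry : ∀ i j, (X * Xᵀ) i j = X i ⬝ᵥ X j := fun _ _ => mul_apply'
  simp only [← Matrix.ext_iff, hentry, Fin.forall_fin_two, dotProduct_comm (X 0) (X 1), of_apply,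
    cons_val_zero, cons_val_one]
  tauto

/-- Choosing a matrix with Gram matrix `diag(a, b)` row by row. -/
def diagonalGramEquiv (a b : R) :
    {X : Matrix (Fin 2) ι R // X * Xᵀ = !![a, 0; 0, b]} ≃
      (x : {x : ι → R // x ⬝ᵥ x = a}) × {y : ι → R // y ⬝ᵥ x.1 = 0 ∧ y ⬝ᵥ y = b} where
  toFun X :=
    have hX := (mul_transpose_eq_diagonal_iff X.1 a b).mp X.2
    ⟨⟨X.1 0, hX.1⟩, ⟨X.1 1, hX.2⟩⟩
  invFun p := ⟨of ![p.1, p.2], (mul_transpose_eq_diagonal_iff _ a b).mpr ⟨p.1.2, p.2.2⟩⟩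
  left_inv X := by ext i j; fin_cases i <;> rfl
  right_inv _ := rfl

lemma card_mul_transpose_eq_diagonal [Finite R] {a : R} (ha : IsUnit a) (b : R) :
    Nat.card {X : Matrix (Fin 2) (Fin 4) R // X * Xᵀ = !![a, 0; 0, b]}
      = sumSqCount (Fin 3) (a * b) * sumSqCount (Fin 4) a := by
  have hcard : ∀ x : {x : Fin 4 → R // x ⬝ᵥ x = a},
      Nat.card {y : Fin 4 → R // y ⬝ᵥ x.1 = 0 ∧ y ⬝ᵥ y = b} = sumSqCount (Fin 3) (a * b) := by
    rintro ⟨x, rfl⟩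
    exact card_orthogonal_and_sumSq_eq ha b
  rw [Nat.card_congr (diagonalGramEquiv a b)]
  exact card_sigma_const hcard

end GramMatrices

section Dyadic

lemma exists_units_sq_eq_one_add_eight_mul {R : Type*} [CommRing R] (h2 : IsNilpotent (2 : R))
    (x : R) : ∃ u : Rˣ, (u : R) ^ 2 = 1 + 8 * x := by
  -- `1 + 2 y` is a square root as soon as `y ^ 2 + y = 2 x`, and `y = 0` solves this modulo `2`.
  let P : Polynomial R := .X ^ 2 + .X - .C (2 * x)
  have hP : IsNilpotent (Polynomial.aeval (0 : R) P) := by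
    simpa [P] using (Commute.all 2 x).isNilpotent_mul_right h2
  have hP' : IsUnit (Polynomial.aeval (0 : R) P.derivative) := by simp [P]
  obtain ⟨y, ⟨-, hy⟩, -⟩ := Polynomial.existsUnique_nilpotent_sub_and_aeval_eq_zero hP hP'
  have hy : y ^ 2 + y - 2 * x = 0 := by simpa [P] using hy
  have hunit : IsUnit (1 + 2 * y) := ((Commute.all 2 y).isNilpotent_mul_right h2).isUnit_one_add
  exact ⟨hunit.unit, by rw [hunit.unit_spec]; linear_combination 4 * hy⟩

/-- Reduction `ℤ/2^(s+3)ℤ → ℤ/8ℤ`. -/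
abbrev reduceModEight (s : ℕ) : ZMod (2 ^ (s + 3)) →+* ZMod 8 :=
  ZMod.castHom ⟨2 ^ s, by ring⟩ (ZMod 8)

lemma isNilpotent_two_zmod_two_pow (t : ℕ) : IsNilpotent (2 : ZMod (2 ^ t)) :=
  ⟨t, by exact_mod_cast ZMod.natCast_self (2 ^ t)⟩

lemma isUnit_intCast_zmod_two_pow {a : ℤ} (ha : Odd a) (t : ℕ) : IsUnit (a : ZMod (2 ^ t)) := by
  rw [ZMod.coe_int_isUnit_iff_isCoprime]
  exact_mod_cast (Int.isCoprime_two_left.mpr ha).pow_left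

lemma exists_units_sq_eq_of_reduceModEight_eq_one {s : ℕ} (v : ZMod (2 ^ (s + 3)))
    (hv : reduceModEight s v = 1) :
    ∃ u : (ZMod (2 ^ (s + 3)))ˣ, (u : ZMod (2 ^ (s + 3))) ^ 2 = v := by
  obtain ⟨k, rfl⟩ := ZMod.intCast_surjective v
  obtain ⟨x, hx⟩ : (8 : ℤ) ∣ k - 1 := by
    refine (ZMod.intCast_zmod_eq_zero_iff_dvd (k - 1) 8).mp ?_
    rw [Int.cast_sub, Int.cast_one, ← map_intCast (reduceModEight s), hv, sub_self]
  obtain rfl : k = 1 + 8 * x := by linarith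
  exact_mod_cast exists_units_sq_eq_one_add_eight_mul (isNilpotent_two_zmod_two_pow (s + 3)) x

lemma card_ker_reduceModEight (s : ℕ) : Nat.card (RingHom.ker (reduceModEight s)) = 2 ^ s := by
  have h := card_ker_mul_card (f := reduceModEight s) (ZMod.castHom_surjective _)
  simp only [Nat.card_zmod] at h
  exact Nat.eq_of_mul_eq_mul_right (by norm_num : 0 < 8) (h.trans (pow_add 2 s 3))

lemma sumSqCount_zmod_two_pow (k s : ℕ) {a : ℤ} (ha : Odd a) :
    sumSqCount (Fin (k + 1)) (a : ZMod (2 ^ (s + 3)))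
      = (2 ^ s) ^ k * sumSqCount (Fin (k + 1)) (a : ZMod 8) := by
  have h := card_ker_mul_sumSqCount (Fin (k + 1)) (ZMod.castHom_surjective _)
    exists_units_sq_eq_of_reduceModEight_eq_one (isUnit_intCast_zmod_two_pow ha (s + 3))
  rw [card_ker_reduceModEight, Fintype.card_fin, map_intCast, pow_succ' (2 ^ s), mul_assoc] at h
  exact Nat.eq_of_mul_eq_mul_left (by positivity) h

lemma sumSqCount_four_zmod_eight {a : ℤ} (ha : Odd a) :
    sumSqCount (Fin 4) (a : ZMod 8) = 512 := by
  have hcount : ∀ c : (ZMod 8)ˣ,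
      Fintype.card {x : Fin 4 → ZMod 8 // x ⬝ᵥ x = (c : ZMod 8)} = 512 := by
    decide +kernel
  obtain ⟨c, hc⟩ := isUnit_intCast_zmod_two_pow ha 3
  rw [sumSqCount, Nat.card_eq_fintype_card]
  exact hc ▸ hcount c

lemma sumSqCount_three_zmod_eight {c : ℤ} (hc : c ≡ 1 [ZMOD 4]) :
    sumSqCount (Fin 3) (c : ZMod 8) = 96 := by
  have hmod : (c : ZMod 8) = 1 ∨ (c : ZMod 8) = 5 := by
    have h : c ≡ 1 [ZMOD 8] ∨ c ≡ 5 [ZMOD 8] := by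
      unfold Int.ModEq at *
      omega
    exact_mod_cast h.imp (ZMod.intCast_eq_intCast_iff c 1 8).mpr
      (ZMod.intCast_eq_intCast_iff c 5 8).mpr
  have hcount : ∀ c : ZMod 8, c = 1 ∨ c = 5 →
      Fintype.card {x : Fin 3 → ZMod 8 // x ⬝ᵥ x = c} = 96 := by
    decide +kernel
  rw [sumSqCount, Nat.card_eq_fintype_card, hcount _ hmod]

end Dyadic

theorem dyadic_count_stabilizes_general (a b : ℤ) (hab : a * b ≡ 1 [ZMOD 4]) (t : ℕ) (ht : 3 ≤ t) :
    Nat.card {X : Matrix (Fin 2) (Fin 4) (ZMod (2 ^ t)) //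
        X * Xᵀ = !![(a : ZMod (2 ^ t)), 0; 0, (b : ZMod (2 ^ t))]}
      = 3 * 2 ^ (5 * t - 1) := by
  obtain ⟨s, rfl⟩ : ∃ s, t = s + 3 := ⟨t - 3, by omega⟩
  have hab_odd : Odd (a * b) := by
    rw [Int.odd_iff]
    unfold Int.ModEq at hab
    omega
  have ha_odd : Odd a := Int.Odd.of_mul_left hab_odd
  rw [card_mul_transpose_eq_diagonal (isUnit_intCast_zmod_two_pow ha_odd _), ← Int.cast_mul,
    sumSqCount_zmod_two_pow 2 s hab_odd, sumSqCount_three_zmod_eight hab,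
    sumSqCount_zmod_two_pow 3 s ha_odd, sumSqCount_four_zmod_eight ha_odd,
    show 5 * (s + 3) - 1 = 5 * s + 14 by omega]
  ring

/-- Dyadic stabilization: for every odd integer `n` and every `t ≥ 3`, the number of
`2 × 4` matrices `X` over `ℤ/2^tℤ` with `X Xᵀ = Gₙ = diag(n+2, n−2) (mod 2^t)`
equals `(3/2) · 2^{5t} = 3 · 2^{5t−1}`; in particular the dyadic solution count
defining `γ₂` stabilizes already at `t = 3`. -/
theorem dyadic_count_stabilizes (n : ℤ) (hodd : Odd n) (t : ℕ) (ht : 3 ≤ t) :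
    Nat.card {X : Matrix (Fin 2) (Fin 4) (ZMod (2 ^ t)) //
        X * Xᵀ = !![(n : ZMod (2 ^ t)) + 2, 0; 0, (n : ZMod (2 ^ t)) - 2]}
      = 3 * 2 ^ (5 * t - 1) := by
  have hn : (n + 2) * (n - 2) ≡ 1 [ZMOD 4] := by
    obtain ⟨k, rfl⟩ := hodd
    exact Int.modEq_iff_dvd.mpr ⟨1 - k ^ 2 - k, by ring⟩
  exact_mod_cast dyadic_count_stabilizes_general (n + 2) (n - 2) hn t ht
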